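/- Let K be a field of characteristic zero and Ω a commutative semigroup. Let Exp be the mould on Ω defined by Exp^∅ = 1 and Exp^w = 1/r! for every word w of length r ≥ 1. If Se is a symétrel mould on Ω then the composed mould Se ∘ Exp is symétral, and if E is an alternel mould on Ω then E ∘ Exp is alternal. -/

import Mathlib

namespace Moulds

variable {X : Type*} {K : Type*}

/-- The multiset of shuffles (interleavings) of two words, counted with multiplicity. -/
def shuffles : List X → List X → Multiset (List X)
  | [], v => {v}
  | a :: u, [] => {a :: u}
  | a :: u, b :: v =>
      (shuffles u (b :: v)).map (a :: ·) + (shuffles (a :: u) v).map (b :: ·)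
termination_by u v => u.length + v.length

/-- The multiset of contracting shuffles of two words: interleavings in which any
pair of adjacent letters coming one from each word may be contracted to their sum. -/
def cshuffles [Add X] : List X → List X → Multiset (List X)
  | [], v => {v}
  | a :: u, [] => {a :: u}
  | a :: u, b :: v =>
      (cshuffles u (b :: v)).map (a :: ·) + (cshuffles (a :: u) v).map (b :: ·)
        + (cshuffles u v).map ((a + b) :: ·)
termination_by u v => u.length + v.length

/-- Shuffle sum Σ_{w ∈ sh(u,v)} M^w (with multiplicity). -/
def shuffleSum [AddCommMonoid K] (M : List X → K) (u v : List X) : K :=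
  ((shuffles u v).map M).sum

/-- Contracting shuffle sum Σ_{w ∈ csh(u,v)} M^w (with multiplicity). -/
def cshuffleSum [Add X] [AddCommMonoid K] (M : List X → K) (u v : List X) : K :=
  ((cshuffles u v).map M).sum

/-- A mould is alternal if it vanishes on ∅ and all its nontrivial shuffle sums vanish. -/
def Alternal [AddCommMonoid K] (M : List X → K) : Prop :=
  M [] = 0 ∧ ∀ u v : List X, u ≠ [] → v ≠ [] → shuffleSum M u v = 0

/-- A mould is symétral if M^∅ = 1 and shuffle sums multiply. -/
def Symetral [CommRing K] (M : List X → K) : Prop :=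
  M [] = 1 ∧ ∀ u v : List X, shuffleSum M u v = M u * M v

/-- A mould is alternel if it vanishes on ∅ and all its nontrivial contracting
shuffle sums vanish. -/
def Alternel [Add X] [AddCommMonoid K] (M : List X → K) : Prop :=
  M [] = 0 ∧ ∀ u v : List X, u ≠ [] → v ≠ [] → cshuffleSum M u v = 0

/-- A mould is symétrel if M^∅ = 1 and contracting shuffle sums multiply. -/
def Symetrel [Add X] [CommRing K] (M : List X → K) : Prop :=
  M [] = 1 ∧ ∀ u v : List X, cshuffleSum M u v = M u * M v

/-- Mould multiplication: (M × N)^w = Σ_{w = w¹w²} M^{w¹} N^{w²}. -/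
def mmul [CommRing K] (M N : List X → K) : List X → K :=
  fun w => ∑ i ∈ Finset.range (w.length + 1), M (w.take i) * N (w.drop i)

/-- The unit mould 1^•, equal to 1 on the empty word and 0 elsewhere. -/
def mone [One K] [Zero K] : List X → K :=
  fun w => match w with | [] => 1 | _ => 0

/-- The mould I^•, equal to 1 on one-letter words and 0 elsewhere. -/
def mId [One K] [Zero K] : List X → K :=
  fun w => if w.length = 1 then 1 else 0

/-- All factorizations of a word into nonempty consecutive blocks; a block is
recorded as (first letter, rest of the block). -/
def splits : List X → List (List (X × List X))
  | [] => [[]]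
  | a :: t =>
      (splits t).flatMap fun p =>
        match p with
        | [] => [[(a, ([] : List X))]]
        | (b, r) :: ps => [(a, b :: r) :: ps, (a, ([] : List X)) :: (b, r) :: ps]

/-- The sum ‖·‖ of the letters of a (nonempty) block. -/
def blockSum [Add X] (b : X × List X) : X := b.2.foldl (· + ·) b.1

/-- Mould composition:
(M ∘ N)^w = Σ_{w = w¹⋯wˢ, wⁱ ≠ ∅} M^{(‖w¹‖,…,‖wˢ‖)} N^{w¹} ⋯ N^{wˢ}. -/
def mcomp [Add X] [CommRing K] (M N : List X → K) : List X → K :=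
  fun w => ((splits w).map
    (fun p => M (p.map blockSum) * (p.map (fun b => N (b.1 :: b.2))).prod)).sum

/-- The monomial series associated to a word. -/
def mono [DecidableEq X] [One K] [Zero K] (w : List X) : List X → K :=
  fun w' => if w' = w then 1 else 0

end Moulds

namespace Moulds

/- STATEMENT 19: Over a field K of characteristic zero and a commutative semigroup Ω,
let Exp be the mould Exp^∅ = 1, Exp^w = 1/r! for words of length r ≥ 1.  If Se is
symétrel then Se ∘ Exp is symétral, and if E is alternel then E ∘ Exp is alternal. -/

variable {Ω : Type*} [AddCommSemigroup Ω] {K : Type*} [Field K] [CharZero K]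

/-- The exponential mould Exp^w = 1/(length w)!; in particular Exp^∅ = 1. -/
noncomputable def ExpMould (Ω : Type*) (K : Type*) [Field K] : List Ω → K :=
  fun w => ((w.length).factorial : K)⁻¹

section Helpers

/-- Sum over deconcatenations. -/
def dsum {X K : Type*} [AddCommMonoid K] : (List X → List X → K) → List X → K
  | H, [] => H [] []
  | H, a :: t => H [] (a :: t) + dsum (fun x y => H (a :: x) y) t

/-- Sum over factorizations. -/
def cs {X K : Type*} [AddCommMonoid K] (F : List (X × List X) → K) (w : List X) : K :=
  ((splits w).map F).sum

theorem sh_nil_left {X K : Type*} [AddCommMonoid K] (M : List X → K) (v : List X) :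
    shuffleSum M [] v = M v := by simp [shuffleSum, shuffles]

theorem sh_nil_right {X K : Type*} [AddCommMonoid K] (M : List X → K) (v : List X) :
    shuffleSum M v [] = M v := by cases v <;> simp [shuffleSum, shuffles]

theorem sh_cons {X K : Type*} [AddCommMonoid K] (M : List X → K) (a b : X) (u v : List X) :
    shuffleSum M (a :: u) (b :: v) = shuffleSum (fun w => M (a :: w)) u (b :: v)
      + shuffleSum (fun w => M (b :: w)) (a :: u) v := by
  simp [shuffleSum, shuffles, Multiset.map_map]

theorem csh_nil_left {X K : Type*} [Add X] [AddCommMonoid K] (M : List X → K) (v : List X) :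
    cshuffleSum M [] v = M v := by simp [cshuffleSum, cshuffles]

theorem csh_nil_right {X K : Type*} [Add X] [AddCommMonoid K] (M : List X → K) (v : List X) :
    cshuffleSum M v [] = M v := by cases v <;> simp [cshuffleSum, cshuffles]

theorem csh_cons {X K : Type*} [Add X] [AddCommMonoid K] (M : List X → K) (a b : X)
    (u v : List X) :
    cshuffleSum M (a :: u) (b :: v) = cshuffleSum (fun w => M (a :: w)) u (b :: v)
      + cshuffleSum (fun w => M (b :: w)) (a :: u) v
      + cshuffleSum (fun w => M ((a + b) :: w)) u v := by
  simp [cshuffleSum, cshuffles, Multiset.map_map]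

theorem sh_add {X K : Type*} [AddCommMonoid K] (M N : List X → K) (u v : List X) :
    shuffleSum (fun w => M w + N w) u v = shuffleSum M u v + shuffleSum N u v := by
  simp [shuffleSum]

theorem sh_mul {X K : Type*} [CommRing K] (c : K) (M : List X → K) (u v : List X) :
    shuffleSum (fun w => c * M w) u v = c * shuffleSum M u v := by
  simp [shuffleSum, Multiset.sum_map_mul_left]

theorem dsum_add {X K : Type*} [AddCommMonoid K] (H G : List X → List X → K) (w : List X) :
    dsum (fun x y => H x y + G x y) w = dsum H w + dsum G w := by
  induction w generalizing H G with
  | nil => rfl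
  | cons a t ih => simp only [dsum, ih]; abel

theorem dsum_mul {X K : Type*} [CommRing K] (c : K) (H : List X → List X → K) (w : List X) :
    dsum (fun x y => c * H x y) w = c * dsum H w := by
  induction w generalizing H with
  | nil => rfl
  | cons a t ih => simp only [dsum, ih]; ring

theorem dsum_congr {X K : Type*} [AddCommMonoid K] (H G : List X → List X → K) (w : List X)
    (h : ∀ x y, y.length ≤ w.length → H x y = G x y) : dsum H w = dsum G w := by
  induction w generalizing H G with
  | nil => exact h _ _ le_rfl
  | cons a t ih =>
    simp only [dsum]
    rw [h _ _ le_rfl, ih]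
    intro x y hy
    exact h _ _ (by simp; omega)

theorem cs_add {X K : Type*} [AddCommMonoid K] (H G : List (X × List X) → K) (w : List X) :
    cs (fun x => H x + G x) w = cs H w + cs G w := by
  simp [cs, List.sum_map_add]

theorem cs_mul {X K : Type*} [CommRing K] (c : K) (H : List (X × List X) → K) (w : List X) :
    cs (fun x => c * H x) w = c * cs H w := by
  simp [cs, List.sum_map_mul_left]

theorem cs_dsum {X Y K : Type*} [AddCommMonoid K] (H : List (X × List X) → List Y → List Y → K)
    (u : List X) (w : List Y) :
    cs (fun p => dsum (H p) w) u = dsum (fun x y => cs (fun p => H p x y) u) w := by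
  induction w generalizing H with
  | nil => rfl
  | cons a t ih => simp only [dsum, cs_add, ih]

theorem dsum_comm {X Y K : Type*} [AddCommMonoid K] (H : List X → List X → List Y → List Y → K)
    (u : List X) (w : List Y) :
    dsum (fun p q => dsum (H p q) w) u = dsum (fun x y => dsum (fun p q => H p q x y) u) w := by
  induction w generalizing H with
  | nil => rfl
  | cons a t ih => simp only [dsum, dsum_add, ih]

theorem cs_nil {X K : Type*} [AddCommMonoid K] (F : List (X × List X) → K) :
    cs F [] = F [] := by simp [cs, splits]

theorem cs_cons {X K : Type*} [AddCommMonoid K] (F : List (X × List X) → K) (a : X)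
    (t : List X) :
    cs F (a :: t) = dsum (fun x y => cs (fun q => F ((a, x) :: q)) y) t := by
  induction t generalizing F a with
  | nil => simp [cs, splits, dsum]
  | cons b t ih =>
    let F' : List (X × List X) → K := fun p => match p with
      | [] => 0
      | (b, r) :: ps => F ((a, b :: r) :: ps)
    have h1 : cs F (a :: b :: t) = cs (fun p => F ((a, []) :: p)) (b :: t) + cs F' (b :: t) := by
      rw [← cs_add]
      unfold cs
      rw [splits]
      generalize splits (b :: t) = l
      induction l with
      | nil => simp
      | cons p l ihl =>
        rw [List.flatMap_cons, List.map_append, List.sum_append, ihl, List.map_cons,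
          List.sum_cons]
        congr 1
        rcases p with _ | ⟨⟨c, r⟩, ps⟩
        · simp [F']
        · simp [F', add_comm]
    rw [h1, dsum, ih F' b]

theorem sh_dsum {X K : Type*} [AddCommMonoid K] (H : List X → List X → K) (u v : List X) :
    shuffleSum (dsum H) u v = dsum (fun u' u'' => dsum (fun v' v'' =>
      shuffleSum (fun x => shuffleSum (fun y => H x y) u'' v'') u' v') v) u := by
  induction u generalizing H v with
  | nil => simp only [dsum, sh_nil_left]
  | cons a u ihu =>
    induction v generalizing H with
    | nil => simp only [dsum, sh_nil_right]
    | cons b v ihv =>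
      rw [sh_cons]
      simp only [dsum, sh_add]
      rw [ihu, ihv]
      simp only [dsum, sh_nil_left, sh_nil_right, sh_cons, dsum_add]
      abel

theorem sh_perm {X K : Type*} [CommRing K] (P : List X → K)
    (hP : ∀ x y, x.Perm y → P x = P y) (u v : List X) :
    shuffleSum P u v = ((u.length + v.length).choose u.length : K) * P (u ++ v) := by
  induction u generalizing P v with
  | nil => simp [sh_nil_left]
  | cons a u ihu =>
    induction v generalizing P with
    | nil => simp [sh_nil_right]
    | cons b v ihv =>
      rw [sh_cons, ihu _ (fun x y h => hP _ _ (h.cons a)), ihv _ (fun x y h => hP _ _ (h.cons b))]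
      have h1 : P (b :: (a :: u ++ v)) = P (a :: u ++ b :: v) := by
        apply hP
        exact List.perm_middle.symm
      rw [h1]
      have e : (a :: u).length + (b :: v).length = (u.length + (b :: v).length) + 1 := by
        simp; omega
      have e' : (a :: u).length + v.length = u.length + (b :: v).length := by
        simp; omega
      rw [e, e', List.length_cons (a := a), Nat.choose_succ_succ]
      push_cast
      simp only [List.cons_append]
      ring

theorem blockSum_coe {X : Type*} [AddCommSemigroup X] (a : X) (x : List X) :
    ((blockSum (a, x) : X) : WithZero X) = ((a :: x).map (fun c : X => (c : WithZero X))).sum := by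
  induction x generalizing a with
  | nil => simp [blockSum]
  | cons b x ih =>
    have := ih (a + b)
    simp only [blockSum, List.foldl_cons] at this ⊢
    rw [this]
    simp [add_assoc]

theorem blockSum_perm {X : Type*} [AddCommSemigroup X] (a b : X) (x y : List X)
    (h : (a :: x).Perm (b :: y)) : blockSum (a, x) = blockSum (b, y) := by
  apply WithZero.coe_injective
  rw [blockSum_coe, blockSum_coe]
  exact (h.map (fun c : X => (c : WithZero X))).sum_eq

theorem blockSum_append {X : Type*} [AddCommSemigroup X] (a b : X) (x y : List X) :
    blockSum (a, x ++ b :: y) = blockSum (a, x) + blockSum (b, y) := by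
  apply WithZero.coe_injective
  rw [WithZero.coe_add, blockSum_coe, blockSum_coe, blockSum_coe]
  simp [add_assoc]

/-- Weight of a factorization. -/
def wt {X K : Type*} [CommRing K] (N : List X → K) (p : List (X × List X)) : K :=
  (p.map (fun b => N (b.1 :: b.2))).prod

theorem mcomp_eq {X K : Type*} [Add X] [CommRing K] (M N : List X → K) (w : List X) :
    mcomp M N w = cs (fun p => wt N p * M (p.map blockSum)) w := by
  simp only [mcomp, cs, wt, mul_comm]

theorem mcomp_cons {X K : Type*} [Add X] [CommRing K] (M N : List X → K) (a : X) (t : List X) :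
    mcomp M N (a :: t) =
      dsum (fun x y => N (a :: x) * mcomp (fun z => M (blockSum (a, x) :: z)) N y) t := by
  simp only [mcomp_eq, cs_cons, ← cs_mul]
  simp only [wt, List.map_cons, List.prod_cons, mul_assoc]

/-- First-block summand of a composition. -/
def HH {X K : Type*} [Add X] [CommRing K] (M N : List X → K) : List X → List X → K
  | [], _ => 0
  | a :: x, y => N (a :: x) * mcomp (fun z => M (blockSum (a, x) :: z)) N y

theorem mcomp_cons' {X K : Type*} [Add X] [CommRing K] (M N : List X → K) (a : X)
    (t : List X) : mcomp M N (a :: t) = dsum (HH M N) (a :: t) := by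
  rw [mcomp_cons, dsum]
  simp only [HH, zero_add]

/-- Right-hand side. -/
def RR {X K : Type*} [Add X] [CommRing K] (M N : List X → K) (u v : List X) : K :=
  cs (fun p => wt N p * cs (fun q => wt N q *
    cshuffleSum M (p.map blockSum) (q.map blockSum)) v) u

theorem RR_cons {X K : Type*} [Add X] [CommRing K] (M N : List X → K) (a b : X)
    (u v : List X) : RR M N (a :: u) (b :: v) =
      dsum (fun x y => N (a :: x) * RR (fun z => M (blockSum (a, x) :: z)) N y (b :: v)) u
      + dsum (fun x y => N (b :: x) * RR (fun z => M (blockSum (b, x) :: z)) N (a :: u) y) v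
      + dsum (fun x y => dsum (fun x' y' => N (a :: x) * N (b :: x') *
        RR (fun z => M ((blockSum (a, x) + blockSum (b, x')) :: z)) N y y') v) u := by
  simp only [RR, cs_cons, List.map_cons, csh_cons, wt, List.prod_cons, ← dsum_mul, ← cs_mul,
    cs_dsum, mul_add, cs_add, dsum_add]
  congr 1
  · congr 1
    · simp only [mul_assoc, mul_left_comm]
    · rw [dsum_comm]
      simp only [mul_assoc, mul_left_comm]
  · simp only [mul_assoc, mul_left_comm]

end Helpers

section Main
variable {Ω : Type*} [AddCommSemigroup Ω] {K : Type*} [Field K] [CharZero K]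

theorem HH_perm (M : List Ω → K) (x x' y : List Ω) (h : x.Perm x') :
    HH M (ExpMould Ω K) x y = HH M (ExpMould Ω K) x' y := by
  rcases x with _ | ⟨a, x⟩
  · rw [List.nil_perm.1 h]
  · rcases x' with _ | ⟨b, x'⟩
    · exact absurd h (by simp)
    · simp only [HH, ExpMould, h.length_eq, blockSum_perm a b x x' h]

theorem main_identity (n : ℕ) (M : List Ω → K) (u v : List Ω) (hn : u.length + v.length ≤ n) :
    shuffleSum (mcomp M (ExpMould Ω K)) u v = RR M (ExpMould Ω K) u v := by
  induction n generalizing M u v with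
  | zero =>
    obtain rfl : u = [] := List.length_eq_zero_iff.1 (by omega)
    simp [RR, cs_nil, csh_nil_left, sh_nil_left, mcomp_eq, wt]
  | succ n ih =>
  rcases u with _ | ⟨a, u⟩
  · simp [RR, cs_nil, csh_nil_left, sh_nil_left, mcomp_eq, wt]
  rcases v with _ | ⟨b, v⟩
  · simp [RR, cs_nil, csh_nil_right, sh_nil_right, mcomp_eq, wt]
  simp only [List.length_cons] at hn
  have h1 : shuffleSum (mcomp M (ExpMould Ω K)) (a :: u) (b :: v)
      = shuffleSum (dsum (HH M (ExpMould Ω K))) (a :: u) (b :: v) := by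
    simp only [sh_cons, mcomp_cons']
  rw [h1, sh_dsum, RR_cons]
  simp only [dsum, sh_nil_left, sh_nil_right, dsum_add]
  have e : ∀ t0 x y z A B C : K, t0 = 0 → x = B → y = A → z = C →
      (t0 + x) + (y + z) = A + B + C := by
    intro t0 x y z A B C h0 hx hy hz
    rw [h0, hx, hy, hz]; ring
  apply e
  · simp [HH, shuffleSum]
  · apply dsum_congr
    intro x y hy
    simp only [HH]
    rw [sh_mul, ih _ _ _ (by simp only [List.length_cons]; omega)]
  · apply dsum_congr
    intro x y hy
    simp only [HH]
    rw [sh_mul, ih _ _ _ (by simp only [List.length_cons]; omega)]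
  · apply dsum_congr
    intro x y hy
    apply dsum_congr
    intro x' y' hy'
    rw [sh_perm _ (by
      intro z z' hz
      congr 1
      funext y
      exact HH_perm M z z' y hz)]
    simp only [List.cons_append, HH]
    rw [sh_mul, ih _ _ _ (by omega), blockSum_append, ← mul_assoc]
    congr 1
    simp only [ExpMould, List.length_cons, List.length_append]
    rw [show x.length + (x'.length + 1) + 1 = (x.length + 1) + (x'.length + 1) by omega,
      Nat.cast_add_choose]
    have := Nat.factorial_ne_zero ((x.length + 1) + (x'.length + 1))
    have := Nat.factorial_ne_zero (x.length + 1)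
    have := Nat.factorial_ne_zero (x'.length + 1)
    field_simp

end Main

theorem duality_via_exp_mould :
    (∀ Se : List Ω → K, Symetrel Se → Symetral (mcomp Se (ExpMould Ω K))) ∧
    (∀ E : List Ω → K, Alternel E → Alternal (mcomp E (ExpMould Ω K))) := by
  refine ⟨fun Se h => ⟨?_, fun u v => ?_⟩, fun E h => ⟨?_, fun u v hu hv => ?_⟩⟩
  · simpa [mcomp, splits] using h.1
  · rw [main_identity _ _ _ _ le_rfl, mcomp_eq, mcomp_eq, RR]
    simp only [h.2]
    rw [mul_comm, ← cs_mul]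
    congr 1
    funext p
    rw [mul_left_comm, ← cs_mul, mul_comm (cs _ v), ← cs_mul, ← cs_mul]
    congr 1
    funext q
    ring
  · simpa [mcomp, splits] using h.1
  · rw [main_identity _ _ _ _ le_rfl, RR]
    rcases u with _ | ⟨a, u⟩
    · exact absurd rfl hu
    rcases v with _ | ⟨b, v⟩
    · exact absurd rfl hv
    have hz : ∀ w : List Ω, dsum (fun _ _ => (0 : K)) w = 0 := by
      intro w
      induction w with
      | nil => rfl
      | cons a t ih => simp [dsum, ih]
    have hc : ∀ w : List Ω, cs (fun _ => (0 : K)) w = 0 := by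
      intro w; simp [cs]
    simp only [cs_cons, List.map_cons, h.2 _ _ (List.cons_ne_nil _ _) (List.cons_ne_nil _ _),
      mul_zero, hc, hz]

end Moulds
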